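/- arXiv:1107.2888 — 2 statements merged into one kernel-verified Lean document; each statement's English description precedes it below -/
import Mathlib

section
/- There exists N such that for every integer n ≥ N that is divisible by 4, every 2-coloring c of Z_n satisfies M_4(n,c) ≥ (2/33)·n². -/
/-- Number of monochromatic `k`-APs in `Z_n` under the 2-coloring `c`:
pairs `(a,d)` with `c a = c (a+d) = ⋯ = c (a+(k-1)d)`. -/
noncomputable def monoAPCount (n k : ℕ) (c : ZMod n → Fin 2) : ℕ :=
  Set.ncard {p : ZMod n × ZMod n | ∀ i < k, c (p.1 + i • p.2) = c p.1}

/-! ### Polynomials in sign variables -/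

/-- A multilinear polynomial in sign variables indexed by `ℕ`: a list of coefficients together with
the variables of the monomial. -/
abbrev SignPoly := List (ℤ × List ℕ)

namespace SignPoly

/-- The value of a monomial with coefficient. -/
def termEval (x : ℕ → ℤˣ) (t : ℤ × List ℕ) : ℤ := t.1 * ((t.2.map x).prod : ℤˣ)

/-- The value of a polynomial at a sign assignment. -/
def eval (x : ℕ → ℤˣ) (P : SignPoly) : ℤ := (P.map (termEval x)).sum

/-- The sum of the absolute values of the coefficients. -/
def weight (P : SignPoly) : ℕ := (P.map fun t => t.1.natAbs).sum

/-- Multiplication by a scalar. -/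
def scale (k : ℤ) (P : SignPoly) : SignPoly := P.map fun t => (k * t.1, t.2)

/-- Substitution of the arithmetic progression `s, s + g, s + 2 g, …` for the variables. -/
def window (s g : ℕ) (P : SignPoly) : SignPoly := P.map fun t => (t.1, t.2.map fun i => s + g * i)

/-- The terms whose leading variable is not `i`. -/
def without (i : ℕ) (P : SignPoly) : SignPoly :=
  P.filter fun t => match t.2 with
    | [] => true
    | j :: _ => !(j == i)

/-- The terms whose leading variable is `i`, with this variable removed. -/
def tails (i : ℕ) (P : SignPoly) : SignPoly :=
  P.filterMap fun t => match t.2 with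
    | [] => none
    | j :: l => if j = i then some (t.1, l) else none

/-- The number with `2 ^ m` digits equal to `1` in base `2 ^ s`. -/
def ones (s : ℕ) : ℕ → ℕ
  | 0 => 1
  | m + 1 => ones s m * (2 ^ (s * 2 ^ m) + 1)

/-- The sums of the positive parts of the terms of `P`, for all sign assignments to `vars`, packed
as the digits in base `2 ^ s` of one natural number. -/
def pack (s : ℕ) : List ℕ → SignPoly → ℕ
  | [], P => (P.map fun t => t.1.toNat).sum
  | i :: vars, P => bif P.isEmpty then 0 else
      pack s vars (P.without i) * (2 ^ (s * 2 ^ vars.length) + 1) +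
        ((P.tails i).weight * ones s vars.length * 2 ^ (s * 2 ^ vars.length) -
          pack s vars (P.tails i) * (2 ^ (s * 2 ^ vars.length) - 1))

/-- A test, with digits of `s + 1` bits, for the nonnegativity of `P` on all sign assignments. -/
def isNonneg (s : ℕ) (vars : List ℕ) (P : SignPoly) : Bool :=
  (P.all fun t => t.2.isSublist vars) && Nat.blt P.weight (2 ^ (s + 1)) &&
    ((pack (s + 1) vars P + (2 ^ (s + 1) - P.weight) / 2 * ones (s + 1) vars.length) &&&
        (2 ^ s * ones (s + 1) vars.length)) == 2 ^ s * ones (s + 1) vars.length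

lemma eval_nil (x : ℕ → ℤˣ) : eval x [] = 0 := rfl

lemma eval_cons (x : ℕ → ℤˣ) (t : ℤ × List ℕ) (P : SignPoly) :
    eval x (t :: P) = termEval x t + eval x P := by simp [eval]

lemma eval_append (x : ℕ → ℤˣ) (P Q : SignPoly) : eval x (P ++ Q) = eval x P + eval x Q := by
  simp [eval]

lemma eval_scale (x : ℕ → ℤˣ) (k : ℤ) (P : SignPoly) : eval x (P.scale k) = k * eval x P := by
  induction P with
  | nil => simp [scale, eval]
  | cons t P ih =>
    have h : scale k (t :: P) = (k * t.1, t.2) :: scale k P := rfl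
    rw [h, eval_cons, eval_cons, ih, termEval, termEval]
    ring

lemma eval_window (x : ℕ → ℤˣ) (s g : ℕ) (P : SignPoly) :
    eval x (P.window s g) = eval (fun i => x (s + g * i)) P := by
  induction P with
  | nil => rfl
  | cons t P ih =>
    have h : window s g (t :: P) = (t.1, t.2.map fun i => s + g * i) :: window s g P := rfl
    rw [h, eval_cons, eval_cons, ih, termEval, termEval, List.map_map]
    rfl

lemma weight_cons (t : ℤ × List ℕ) (P : SignPoly) :
    weight (t :: P) = t.1.natAbs + weight P := by simp [weight]

lemma weight_append (P Q : SignPoly) : weight (P ++ Q) = weight P + weight Q := by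
  simp [weight]

lemma weight_scale_neg_one (P : SignPoly) : weight (P.scale (-1)) = weight P := by
  simp [weight, scale, Function.comp_def]

lemma without_cons (i : ℕ) (c : ℤ) (l : List ℕ) (P : SignPoly) :
    without i ((c, l) :: P) = if l.head? = some i then without i P else (c, l) :: without i P := by
  cases l with
  | nil => simp [without]
  | cons j l => by_cases h : j = i <;> simp [without, h]

lemma tails_cons (i : ℕ) (c : ℤ) (l : List ℕ) (P : SignPoly) :
    tails i ((c, l) :: P) = if l.head? = some i then (c, l.tail) :: tails i P else tails i P := by
  cases l with
  | nil => simp [tails]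
  | cons j l => by_cases h : j = i <;> simp [tails, h]

lemma without_append (i : ℕ) (P Q : SignPoly) :
    without i (P ++ Q) = without i P ++ without i Q := by simp [without]

lemma tails_append (i : ℕ) (P Q : SignPoly) : tails i (P ++ Q) = tails i P ++ tails i Q := by
  simp [tails]

lemma without_scale (i : ℕ) (k : ℤ) (P : SignPoly) :
    without i (P.scale k) = (without i P).scale k := by
  induction P with
  | nil => rfl
  | cons t P ih =>
    obtain ⟨c, l⟩ := t
    have h : scale k ((c, l) :: P) = (k * c, l) :: scale k P := rfl
    rw [h, without_cons, without_cons, ih]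
    split_ifs <;> rfl

lemma tails_scale (i : ℕ) (k : ℤ) (P : SignPoly) :
    tails i (P.scale k) = (tails i P).scale k := by
  induction P with
  | nil => rfl
  | cons t P ih =>
    obtain ⟨c, l⟩ := t
    have h : scale k ((c, l) :: P) = (k * c, l) :: scale k P := rfl
    rw [h, tails_cons, tails_cons, ih]
    split_ifs <;> rfl

lemma weight_without_add_weight_tails (i : ℕ) (P : SignPoly) :
    weight (without i P) + weight (tails i P) = weight P := by
  induction P with
  | nil => rfl
  | cons t P ih =>
    obtain ⟨c, l⟩ := t
    rw [without_cons, tails_cons]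
    split_ifs <;> simp only [weight_cons] <;> omega

lemma eval_eq_without_add_tails (x : ℕ → ℤˣ) (i : ℕ) (P : SignPoly) :
    eval x P = eval x (without i P) + x i * eval x (tails i P) := by
  induction P with
  | nil => simp [without, tails, eval]
  | cons t P ih =>
    obtain ⟨c, l⟩ := t
    rw [without_cons, tails_cons]
    split_ifs with h
    · obtain ⟨l', rfl⟩ : ∃ l', l = i :: l' := by
        cases l with
        | nil => simp at h
        | cons j l' => exact ⟨l', by simp_all⟩
      simp only [eval_cons, termEval, ih, List.map_cons, List.prod_cons, Units.val_mul,
        List.tail_cons]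
      ring
    · simp only [eval_cons, ih]
      ring

lemma pack_nil (s : ℕ) (vars : List ℕ) : pack s vars [] = 0 := by
  cases vars <;> simp [pack]

lemma pack_cons (s i : ℕ) (vars : List ℕ) (P : SignPoly) :
    pack s (i :: vars) P = pack s vars (P.without i) * (2 ^ (s * 2 ^ vars.length) + 1) +
        ((P.tails i).weight * ones s vars.length * 2 ^ (s * 2 ^ vars.length) -
          pack s vars (P.tails i) * (2 ^ (s * 2 ^ vars.length) - 1)) := by
  cases P with
  | nil => simp [pack_nil, without, tails, weight]
  | cons t P => simp [pack]

lemma sum_toNat_le_weight (P : SignPoly) : (P.map fun t => t.1.toNat).sum ≤ P.weight := by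
  induction P with
  | nil => simp
  | cons t P ih =>
    rw [weight_cons, List.map_cons, List.sum_cons]
    omega

lemma pack_cons_of_le (s i : ℕ) (vars : List ℕ) (P : SignPoly)
    (h : ∀ Q, pack s vars Q ≤ weight Q * ones s vars.length) :
    pack s (i :: vars) P = pack s vars (P.without i) + pack s vars (P.tails i) +
      2 ^ (s * 2 ^ vars.length) * (pack s vars (P.without i) +
        (weight (P.tails i) * ones s vars.length - pack s vars (P.tails i))) := by
  rw [pack_cons]
  obtain ⟨d, hd⟩ := Nat.exists_eq_add_of_le (h (P.tails i))
  obtain ⟨K, hK⟩ : ∃ K, 2 ^ (s * 2 ^ vars.length) = K + 1 :=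
    ⟨_, (Nat.sub_add_cancel Nat.one_le_two_pow).symm⟩
  rw [hd, hK, Nat.add_sub_cancel, Nat.add_sub_cancel_left]
  have : (pack s vars (P.tails i) + d) * (K + 1) - pack s vars (P.tails i) * K =
      pack s vars (P.tails i) + d * (K + 1) := by
    apply Nat.sub_eq_of_eq_add
    ring
  rw [this]
  ring

lemma pack_le (s : ℕ) (vars : List ℕ) (P : SignPoly) :
    pack s vars P ≤ weight P * ones s vars.length := by
  induction vars generalizing P with
  | nil => simpa [pack, ones] using sum_toNat_le_weight P
  | cons i vars ih =>
    rw [pack_cons_of_le s i vars P ih, List.length_cons, ones,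
      ← weight_without_add_weight_tails i P]
    have h₁ := ih (P.without i)
    have h₂ := ih (P.tails i)
    have h₃ : pack s vars (P.without i) +
        (weight (P.tails i) * ones s vars.length - pack s vars (P.tails i)) ≤
        (weight (P.without i) + weight (P.tails i)) * ones s vars.length := by
      rw [add_mul]
      omega
    calc _ ≤ (weight (P.without i) + weight (P.tails i)) * ones s vars.length +
          2 ^ (s * 2 ^ vars.length) *
            ((weight (P.without i) + weight (P.tails i)) * ones s vars.length) := by
          gcongr
          rw [add_mul]
          omega
      _ = _ := by ring

lemma pack_append (s : ℕ) (vars : List ℕ) (P Q : SignPoly) :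
    pack s vars (P ++ Q) = pack s vars P + pack s vars Q := by
  induction vars generalizing P Q with
  | nil => simp [pack]
  | cons i vars ih =>
    simp only [pack_cons_of_le s i vars _ (pack_le s vars), without_append, tails_append, ih,
      weight_append, add_mul]
    have h₁ := pack_le s vars (P.tails i)
    have h₂ := pack_le s vars (Q.tails i)
    have h₃ : ∀ u v : ℕ, pack s vars (P.tails i) ≤ u → pack s vars (Q.tails i) ≤ v →
        u + v - (pack s vars (P.tails i) + pack s vars (Q.tails i)) =
          (u - pack s vars (P.tails i)) + (v - pack s vars (Q.tails i)) := by omega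
    rw [h₃ _ _ h₁ h₂]
    ring

lemma pack_scale_neg_one (s : ℕ) (vars : List ℕ) (P : SignPoly) :
    pack s vars (P.scale (-1)) + pack s vars P = weight P * ones s vars.length := by
  induction vars generalizing P with
  | nil =>
    induction P with
    | nil => rfl
    | cons t P ih =>
      simp only [pack, scale, List.map_cons, List.sum_cons, List.map_map, ones, mul_one,
        List.length_nil, weight_cons] at ih ⊢
      omega
  | cons i vars ih =>
    simp only [pack_cons_of_le s i vars _ (pack_le s vars), without_scale, tails_scale,
      weight_scale_neg_one, List.length_cons, ones]
    have h₁ := ih (P.without i)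
    have h₂ := ih (P.tails i)
    rw [← weight_without_add_weight_tails i P]
    have h₃ : weight (P.tails i) * ones s vars.length - pack s vars ((P.tails i).scale (-1)) =
        pack s vars (P.tails i) := by omega
    have h₄ : weight (P.tails i) * ones s vars.length - pack s vars (P.tails i) =
        pack s vars ((P.tails i).scale (-1)) := by omega
    rw [h₃, h₄]
    calc _ = (pack s vars ((P.without i).scale (-1)) + pack s vars (P.without i) +
          (pack s vars ((P.tails i).scale (-1)) + pack s vars (P.tails i))) *
            (2 ^ (s * 2 ^ vars.length) + 1) := by ring
      _ = _ := by rw [h₁, h₂]; ring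

lemma pack_cons_eq (s i : ℕ) (vars : List ℕ) (P : SignPoly) :
    pack s (i :: vars) P = pack s vars (P.without i ++ P.tails i) +
      2 ^ (s * 2 ^ vars.length) * pack s vars (P.without i ++ (P.tails i).scale (-1)) := by
  rw [pack_cons_of_le s i vars _ (pack_le s vars), pack_append, pack_append,
    ← pack_scale_neg_one s vars (P.tails i), Nat.add_sub_cancel]

lemma ones_mul_lt (s m a : ℕ) (ha : a < 2 ^ s) : a * ones s m < 2 ^ (s * 2 ^ m) := by
  induction m with
  | zero => simpa [ones] using ha
  | succ m ih =>
    calc a * ones s (m + 1) = a * ones s m * 2 ^ (s * 2 ^ m) + a * ones s m := by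
          rw [ones]; ring
      _ < (a * ones s m + 1) * 2 ^ (s * 2 ^ m) := by rw [add_mul, one_mul]; gcongr
      _ ≤ 2 ^ (s * 2 ^ m) * 2 ^ (s * 2 ^ m) := by gcongr; omega
      _ = 2 ^ (s * 2 ^ (m + 1)) := by rw [← pow_add]; congr 1; ring

lemma eval_base (x : ℕ → ℤˣ) (P : SignPoly) (h : ∀ t ∈ P, t.2.Sublist []) :
    eval x P = 2 * (P.map fun t => t.1.toNat).sum - weight P := by
  induction P with
  | nil => simp [eval, weight]
  | cons t P ih =>
    have h₁ : t.2 = [] := List.sublist_nil.1 (h t (by simp))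
    rw [eval_cons, ih fun u hu => h u (by simp [hu]), termEval, h₁, weight_cons, List.map_cons,
      List.sum_cons]
    push_cast
    rw [List.map_nil, List.prod_nil, Units.val_one, mul_one]
    have h₂ : t.1 = 2 * (t.1.toNat : ℤ) - t.1.natAbs := by omega
    have h₃ := Int.natCast_natAbs t.1
    omega

lemma sublist_of_mem_without {i : ℕ} {vars : List ℕ} {P : SignPoly}
    (h : ∀ t ∈ P, t.2.Sublist (i :: vars)) : ∀ t ∈ P.without i, t.2.Sublist vars := by
  intro t ht
  obtain ⟨htP, hti⟩ := List.mem_filter.1 ht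
  rcases List.sublist_cons_iff.1 (h t htP) with h' | ⟨r, hr, -⟩
  · exact h'
  · simp [hr] at hti

lemma sublist_of_mem_tails {i : ℕ} {vars : List ℕ} {P : SignPoly}
    (h : ∀ t ∈ P, t.2.Sublist (i :: vars)) : ∀ t ∈ P.tails i, t.2.Sublist vars := by
  intro t ht
  obtain ⟨⟨c, l⟩, htP, hti⟩ := List.mem_filterMap.1 ht
  cases l with
  | nil => simp at hti
  | cons j l =>
    by_cases hj : j = i
    · subst hj
      simp only [if_true, Option.some.injEq] at hti
      rw [← hti]
      exact List.cons_sublist_cons.1 (h _ htP)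
    · simp [hj] at hti

lemma and_eq_of_add_mul {k a b c d : ℕ} (ha : a < 2 ^ k) (hc : c < 2 ^ k)
    (h : (a + 2 ^ k * b) &&& (c + 2 ^ k * d) = c + 2 ^ k * d) : a &&& c = c ∧ b &&& d = d := by
  constructor
  · have := congrArg (· % 2 ^ k) h
    simpa [Nat.and_mod_two_pow, Nat.add_mul_mod_self_left, Nat.mod_eq_of_lt ha,
      Nat.mod_eq_of_lt hc] using this
  · have := congrArg (· / 2 ^ k) h
    simpa [Nat.and_div_two_pow, Nat.add_mul_div_left, Nat.div_eq_of_lt ha,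
      Nat.div_eq_of_lt hc] using this

lemma le_eval_of_and_eq (s a b : ℕ) (x : ℕ → ℤˣ) (vars : List ℕ) (P : SignPoly)
    (hP : ∀ t ∈ P, t.2.Sublist vars) (hw : weight P + a < 2 ^ s) (hb : b < 2 ^ s)
    (h : (pack s vars P + a * ones s vars.length) &&& (b * ones s vars.length) =
      b * ones s vars.length) :
    2 * (b : ℤ) ≤ eval x P + weight P + 2 * a := by
  induction vars generalizing P with
  | nil =>
    rw [eval_base x P hP]
    simp only [pack, ones, List.length_nil, mul_one] at h
    have := h ▸ Nat.and_le_left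
    omega
  | cons i vars ih =>
    have hw₁ := weight_without_add_weight_tails i P
    have hP₁ := sublist_of_mem_without hP
    have hP₂ := sublist_of_mem_tails hP
    have hlt : pack s vars (P.without i ++ P.tails i) + a * ones s vars.length <
        2 ^ (s * 2 ^ vars.length) := by
      refine lt_of_le_of_lt ?_ (ones_mul_lt s vars.length _ hw)
      rw [add_mul, ← hw₁, ← weight_append]
      gcongr
      exact pack_le s vars _
    have hsplit : pack s (i :: vars) P + a * ones s (i :: vars).length =
        (pack s vars (P.without i ++ P.tails i) + a * ones s vars.length) +
          2 ^ (s * 2 ^ vars.length) *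
            (pack s vars (P.without i ++ (P.tails i).scale (-1)) + a * ones s vars.length) := by
      rw [pack_cons_eq, List.length_cons, ones]
      ring
    have hsplit' : b * ones s (i :: vars).length =
        b * ones s vars.length + 2 ^ (s * 2 ^ vars.length) * (b * ones s vars.length) := by
      rw [List.length_cons, ones]
      ring
    rw [hsplit, hsplit'] at h
    obtain ⟨h₁, h₂⟩ := and_eq_of_add_mul hlt (ones_mul_lt s vars.length b hb) h
    rw [eval_eq_without_add_tails x i P]
    rcases Int.units_eq_one_or (x i) with hx | hx
    · have := ih (P.without i ++ P.tails i)
        (fun t ht => (List.mem_append.1 ht).elim (hP₁ t) (hP₂ t))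
        (by rw [weight_append, hw₁]; exact hw) h₁
      rw [weight_append, hw₁, eval_append] at this
      simpa [hx] using this
    · have := ih (P.without i ++ (P.tails i).scale (-1))
        (fun t ht => (List.mem_append.1 ht).elim (hP₁ t) fun ht' => by
          obtain ⟨u, hu, rfl⟩ := List.mem_map.1 ht'
          exact hP₂ u hu)
        (by rw [weight_append, weight_scale_neg_one, hw₁]; exact hw) h₂
      rw [weight_append, weight_scale_neg_one, hw₁, eval_append, eval_scale] at this
      simpa [hx] using this

theorem eval_nonneg_of_isNonneg {s : ℕ} {vars : List ℕ} {P : SignPoly}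
    (h : P.isNonneg s vars = true) (x : ℕ → ℤˣ) : 0 ≤ eval x P := by
  simp only [isNonneg, Bool.and_eq_true, List.all_eq_true, List.isSublist_iff_sublist,
    Nat.blt_eq, beq_iff_eq] at h
  obtain ⟨⟨hP, hw⟩, h⟩ := h
  have h2 : 2 ^ (s + 1) = 2 * 2 ^ s := pow_succ' 2 s
  have := le_eval_of_and_eq (s + 1) ((2 ^ (s + 1) - P.weight) / 2) (2 ^ s) x vars P hP
    (by omega) (Nat.pow_lt_pow_right (by norm_num) (Nat.lt_succ_self s)) h
  push_cast at this
  have h2' : (2 : ℤ) ^ (s + 1) = 2 * 2 ^ s := pow_succ' 2 s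
  have hw' : (weight P : ℤ) < 2 ^ (s + 1) := by exact_mod_cast hw
  rw [Nat.cast_sub hw.le] at this
  push_cast at this
  omega

end SignPoly

open SignPoly

/-- A polynomial in `7` sign variables that is nonnegative on all sign patterns; it is used to
compare windows of step `1` with windows of step `2`. -/
def doublingForm : SignPoly :=
  [(1046, []), (-156, [0, 1]), (165, [0, 2]), (-66, [0, 3]), (172, [0, 4]), (-43, [0, 5]),
   (114, [0, 6]), (462, [1, 2]), (707, [1, 3]), (411, [1, 4]), (678, [1, 5]), (-43, [1, 6]),
   (332, [2, 3]), (699, [2, 4]), (411, [2, 5]), (172, [2, 6]), (332, [3, 4]), (707, [3, 5]),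
   (-66, [3, 6]), (462, [4, 5]), (165, [4, 6]), (-156, [5, 6]), (293, [0, 1, 2, 3]),
   (-100, [0, 1, 2, 4]), (59, [0, 1, 2, 5]), (18, [0, 1, 2, 6]), (51, [0, 1, 3, 4]),
   (-21, [0, 1, 3, 5]), (-6, [0, 1, 3, 6]), (66, [0, 1, 4, 5]), (-33, [0, 1, 4, 6]),
   (-25, [0, 1, 5, 6]), (-172, [0, 2, 3, 4]), (34, [0, 2, 3, 5]), (1, [0, 2, 3, 6]),
   (13, [0, 2, 4, 5]), (-38, [0, 2, 4, 6]), (-33, [0, 2, 5, 6]), (84, [0, 3, 4, 5]),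
   (1, [0, 3, 4, 6]), (-6, [0, 3, 5, 6]), (18, [0, 4, 5, 6]), (816, [1, 2, 3, 4]),
   (541, [1, 2, 3, 5]), (84, [1, 2, 3, 6]), (625, [1, 2, 4, 5]), (13, [1, 2, 4, 6]),
   (66, [1, 2, 5, 6]), (541, [1, 3, 4, 5]), (34, [1, 3, 4, 6]), (-21, [1, 3, 5, 6]),
   (59, [1, 4, 5, 6]), (816, [2, 3, 4, 5]), (-172, [2, 3, 4, 6]), (51, [2, 3, 5, 6]),
   (-100, [2, 4, 5, 6]), (293, [3, 4, 5, 6]), (-26, [0, 1, 2, 3, 4, 5]),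
   (89, [0, 1, 2, 3, 4, 6]), (-16, [0, 1, 2, 3, 5, 6]), (115, [0, 1, 2, 4, 5, 6]),
   (-16, [0, 1, 3, 4, 5, 6]), (89, [0, 2, 3, 4, 5, 6]), (-26, [1, 2, 3, 4, 5, 6])]

/-- A polynomial in `6` sign variables that is nonnegative on all sign patterns; it is used to
compare windows of step `1` with windows of step `3`. -/
def triplingForm : SignPoly :=
  [(902, []), (174, [0, 1]), (-101, [0, 2]), (-249, [0, 3]), (246, [0, 4]), (19, [0, 5]),
   (-528, [1, 2]), (-231, [1, 3]), (335, [1, 4]), (246, [1, 5]), (332, [2, 3]), (-231, [2, 4]),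
   (-249, [2, 5]), (-528, [3, 4]), (-101, [3, 5]), (174, [4, 5]), (402, [0, 1, 2, 3]),
   (-249, [0, 1, 2, 4]), (29, [0, 1, 2, 5]), (-101, [0, 1, 3, 4]), (30, [0, 1, 3, 5]),
   (-98, [0, 1, 4, 5]), (177, [0, 2, 3, 4]), (-254, [0, 2, 3, 5]), (30, [0, 2, 4, 5]),
   (29, [0, 3, 4, 5]), (746, [1, 2, 3, 4]), (177, [1, 2, 3, 5]), (-101, [1, 2, 4, 5]),
   (-249, [1, 3, 4, 5]), (402, [2, 3, 4, 5]), (16, [0, 1, 2, 3, 4, 5])]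

/-- A polynomial in `6` sign variables that is nonnegative on all sign patterns; it is used to
compare windows of step `2` with windows of step `4`. -/
def redoublingForm : SignPoly :=
  [(409, []), (194, [0, 1]), (96, [0, 2]), (130, [0, 3]), (32, [0, 4]), (-153, [0, 5]),
   (275, [1, 2]), (217, [1, 3]), (148, [1, 4]), (32, [1, 5]), (344, [2, 3]), (217, [2, 4]),
   (130, [2, 5]), (275, [3, 4]), (96, [3, 5]), (194, [4, 5]), (228, [0, 1, 2, 3]),
   (130, [0, 1, 2, 4]), (-26, [0, 1, 2, 5]), (96, [0, 1, 3, 4]), (-16, [0, 1, 3, 5]),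
   (53, [0, 1, 4, 5]), (-2, [0, 2, 3, 4]), (-142, [0, 2, 3, 5]), (-16, [0, 2, 4, 5]),
   (-26, [0, 3, 4, 5]), (206, [1, 2, 3, 4]), (-2, [1, 2, 3, 5]), (96, [1, 2, 4, 5]),
   (130, [1, 3, 4, 5]), (228, [2, 3, 4, 5]), (43, [0, 1, 2, 3, 4, 5])]

/-- A polynomial in `5` sign variables that is nonnegative on all sign patterns; it is used to
compare windows of step `1` with windows of step `5`. -/
def quintuplingForm : SignPoly :=
  [(341, []), (-31, [0, 1]), (-51, [0, 2]), (-31, [0, 3]), (341, [0, 4]), (-31, [1, 2]),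
   (-51, [1, 3]), (-31, [1, 4]), (-31, [2, 3]), (-51, [2, 4]), (-31, [3, 4]),
   (341, [0, 1, 2, 3]), (-31, [0, 1, 2, 4]), (-51, [0, 1, 3, 4]), (-31, [0, 2, 3, 4]),
   (341, [1, 2, 3, 4])]

set_option maxHeartbeats 2000000 in
/-- Translates of monomials, with the weights by which they are moved. -/
def translationData : List (List ℕ × List (ℤ × ℕ)) :=
  [
   ([3, 4], [(-15797, 1), (-13481, 2), (-1078, 3), (1464, 4), (-347, 5), (-8, 6), (-8, 7),
     (-35, 8), (18, 9), (-3, 10), (14, 11), (18, 12), (25, 13)]),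
   ([3, 5], [(-14046, 1), (421, 2), (1189, 3), (132, 4), (48, 5), (-264, 6), (-90, 7), (-198,
     8), (-84, 9), (-29, 10), (100, 11), (-22, 12)]),
   ([0, 3], [(-15547, 3), (1640, 4), (58, 5), (-485, 6), (-40, 7), (-26, 8), (502, 9), (-40,
     10), (-21, 11), (-191, 12), (-32, 13), (-41, 14), (-4, 17)]),
   ([0, 4], [(2757, 3), (1817, 4), (332, 5), (-199, 6), (222, 7), (-479, 8), (222, 9), (-441,
     10), (-12, 11), (-469, 12), (-30, 13), (-369, 16)]),
   ([0, 5], [(-35, 3), (-83, 4), (44, 5), (-7, 6), (-38, 7), (-38, 8), (-7, 9), (44, 10), (3,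
     11), (-6, 12), (12, 15)]),
   ([0, 6], [(395, 3), (196, 4), (-59, 5), (66, 6), (-396, 7), (-201, 8), (42, 9), (-64, 10),
     (-64, 11), (-7, 14)]),
   ([0, 7], [(-6, 3), (5, 4), (-5, 5), (6, 6), (6, 7), (-5, 8), (5, 9), (-6, 10), (-1, 13)]),
   ([0, 8], [(10, 3), (-303, 4), (-66, 5), (-653, 6), (-66, 7), (-367, 8), (10, 9), (-221, 12)]),
   ([0, 9], [(-364, 3), (-20, 4), (-19, 5), (230, 6), (-20, 7), (-29, 8), (-14, 11)]),
   ([0, 10], [(-3, 3), (-297, 4), (44, 5), (9, 6), (-3, 7), (46, 10)]),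
   ([0, 11], [(-2, 3), (-2, 6), (2, 9)]), ([0, 12], [(-253, 3), (-60, 4), (-7, 5), (-128, 8)]),
   ([0, 13], [(-14, 3), (-14, 4), (14, 7)]), ([0, 14], [(-19, 3), (10, 6)]),
   ([0, 15], [(10, 5)]), ([0, 16], [(-141, 4)]),
   ([3, 4, 5, 6], [(5701, 1), (3017, 2), (650, 3), (353, 4), (373, 5), (373, 6), (353, 7), (64,
     8), (179, 9), (126, 10), (157, 11)]),
   ([3, 4, 5, 7], [(1617, 1), (-360, 2), (-15, 3), (-12, 4), (-34, 5), (-24, 6), (-16, 7), (-3,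
     8), (-20, 9), (-15, 10)]),
   ([3, 4, 5, 8], [(214, 1), (-5, 2), (-15, 3), (-208, 4), (-222, 5), (-14, 6), (3, 7), (33,
     8), (-27, 9)]),
   ([3, 4, 5, 9], [(-28, 1), (11, 2), (-3, 4), (5, 5), (-4, 6), (-13, 7), (2, 8)]),
   ([3, 4, 6, 7], [(930, 1), (134, 2), (16, 3), (-224, 4), (-247, 5), (-224, 6), (16, 7), (32,
     8), (-17, 9), (19, 10)]),
   ([3, 4, 6, 8], [(47, 1), (-13, 2), (-15, 3), (-29, 4), (5, 5), (-21, 7), (-12, 8), (-4, 9)]),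
   ([3, 4, 6, 9], [(-2, 1), (-37, 2), (-49, 3), (229, 4), (-21, 5), (33, 6), (-65, 7), (-58, 8)]),
   ([3, 4, 7, 8], [(44, 1), (-53, 2), (-70, 3), (187, 4), (187, 5), (-70, 6), (-53, 7), (-88,
     8), (38, 9)]),
   ([3, 4, 7, 9], [(12, 1), (15, 2), (16, 3), (-28, 4), (9, 5), (18, 6), (-5, 7), (13, 8)]),
   ([3, 4, 8, 9], [(83, 1), (-3, 2), (6, 3), (-194, 4), (6, 5), (-3, 6), (83, 7), (36, 8)]),
   ([3, 5, 6, 7], [(315, 1), (-203, 2), (-16, 3), (-24, 4), (-34, 5), (-12, 6), (-15, 7), (-16,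
     8), (4, 9), (-16, 10)]),
   ([3, 5, 6, 8], [(107, 1), (33, 2), (34, 3), (252, 4), (252, 5), (34, 6), (33, 7), (39, 8),
     (-45, 9)]),
   ([3, 5, 6, 9], [(11, 1), (9, 2), (18, 3), (-9, 4), (-5, 5), (-10, 6), (-11, 7), (3, 8)]),
   ([3, 5, 7, 8], [(-54, 1), (-21, 2), (5, 4), (-29, 5), (-15, 6), (-13, 7), (21, 8), (-4, 9)]),
   ([3, 5, 7, 9], [(292, 1), (38, 2), (-362, 3), (317, 4), (-318, 5), (38, 6), (-164, 7), (119,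
     8)]),
   ([3, 5, 7, 11], [(346, 1), (34, 2), (-555, 3), (-37, 4), (209, 5), (-8, 6)]),
   ([3, 5, 7, 13], [(-79, 1), (50, 2), (-52, 3), (38, 4)]), ([3, 5, 7, 15], [(-5, 1), (-25, 2)]),
   ([3, 5, 8, 9], [(-5, 1), (18, 2), (9, 3), (-28, 4), (16, 5), (15, 6), (12, 7), (16, 8)]),
   ([3, 5, 9, 11], [(195, 1), (109, 2), (-501, 3), (109, 4), (3, 5), (43, 6)]),
   ([3, 5, 9, 13], [(31, 1), (-3, 2), (-23, 3), (-7, 4)]), ([3, 5, 9, 15], [(-2, 1), (-9, 2)]),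
   ([3, 5, 11, 13], [(59, 1), (42, 2), (-47, 3), (-27, 4)]), ([3, 5, 11, 15], [(-20, 2)]),
   ([3, 5, 13, 15], [(-16, 1), (8, 2)]),
   ([0, 3, 4, 5], [(228, 3), (151, 4), (3, 5), (-14, 6), (-222, 7), (-208, 8), (-15, 9), (-5,
     10), (46, 11), (37, 12)]),
   ([0, 3, 4, 6], [(5, 3), (-11, 4), (-10, 5), (-5, 6), (-9, 7), (18, 8), (9, 9), (11, 10),
     (-8, 11)]),
   ([0, 3, 5, 6], [(-70, 3), (-65, 4), (33, 5), (-21, 6), (229, 7), (-49, 8), (-37, 9), (-2,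
     10), (-18, 11)]),
   ([0, 3, 6, 9], [(-585, 3), (243, 4), (162, 5), (-240, 6), (243, 7), (161, 8), (209, 11)]),
   ([0, 3, 6, 12], [(-189, 3), (-10, 4), (-16, 5), (-29, 8)]), ([0, 3, 6, 15], [(23, 5)]),
   ([0, 3, 9, 12], [(64, 3), (-96, 4), (-37, 5), (-16, 8)]), ([0, 3, 9, 15], [(12, 5)]),
   ([0, 3, 12, 15], [(-49, 5)]),
   ([0, 4, 5, 6], [(38, 3), (-13, 4), (-4, 5), (5, 6), (-3, 7), (11, 9), (-28, 10), (-5, 11)]),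
   ([0, 4, 6, 8], [(-8, 3), (205, 4), (-37, 5), (-291, 6), (34, 7), (86, 8), (13, 9)]),
   ([0, 4, 6, 10], [(33, 3), (-274, 4), (198, 5), (10, 6), (33, 7)]),
   ([0, 4, 6, 12], [(1, 3), (-20, 4), (19, 5)]),
   ([0, 4, 8, 10], [(-7, 3), (-55, 4), (-3, 5), (63, 6), (1, 7)]),
   ([0, 4, 8, 12], [(158, 3), (-288, 4), (158, 5), (-15, 8)]), ([0, 4, 8, 16], [(132, 4)]),
   ([0, 4, 10, 12], [(-20, 3), (20, 5)]),
   ([0, 6, 8, 10], [(38, 3), (-104, 4), (50, 5), (-27, 6), (43, 7)]),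
   ([0, 6, 8, 12], [(19, 3), (-20, 4), (1, 5)]),
   ([0, 6, 9, 12], [(233, 3), (-10, 4), (-12, 5), (-6, 8)]), ([0, 6, 9, 15], [(-127, 5)]),
   ([0, 6, 10, 12], [(-9, 3), (-2, 4), (11, 5)]), ([0, 6, 12, 15], [(17, 5)]),
   ([0, 8, 10, 12], [(-25, 3), (-5, 4), (29, 5)]), ([0, 8, 12, 16], [(-132, 4)]),
   ([0, 9, 12, 15], [(7, 5)]),
   ([3, 4, 5, 6, 7, 8], [(-41, 1), (15, 2), (10, 3), (-17, 4), (-17, 5), (10, 6), (15, 7), (11,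
     8), (9, 9)]),
   ([3, 4, 5, 6, 7, 9], [(-20, 1), (10, 2), (14, 3), (-245, 4), (-7, 5), (31, 6), (29, 7), (27,
     8)]),
   ([3, 4, 5, 6, 8, 9], [(-4, 1), (13, 2), (-4, 3), (-2, 4), (-7, 5), (23, 6), (-5, 7), (15, 8)]),
   ([3, 4, 5, 7, 8, 9], [(-89, 1), (-115, 2), (-50, 3), (237, 4), (-50, 5), (-115, 6), (-89,
     7), (20, 8)]),
   ([3, 4, 6, 7, 8, 9], [(-5, 1), (23, 2), (-7, 3), (-2, 4), (-4, 5), (13, 6), (-4, 7), (5, 8)]),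
   ([3, 5, 6, 7, 8, 9], [(29, 1), (31, 2), (-7, 3), (-245, 4), (14, 5), (10, 6), (-20, 7),
     (-15, 8)]),
   ([3, 5, 7, 9, 11, 13], [(98, 1), (-57, 2), (12, 3), (-27, 4)]),
   ([3, 5, 7, 9, 11, 15], [(-57, 1), (36, 2)]), ([3, 5, 7, 9, 13, 15], [(9, 1), (7, 2)]),
   ([3, 5, 7, 11, 13, 15], [(-18, 1), (9, 2)]), ([3, 5, 9, 11, 13, 15], [(9, 1), (-16, 2)]),
   ([0, 3, 6, 9, 12, 15], [(8, 5)]), ([0, 4, 6, 8, 10, 12], [(36, 3), (-57, 4), (21, 5)])]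

/-- Eight times the indicator of a monochromatic progression of length four. -/
def monoForm : SignPoly :=
  [(1, []), (1, [0, 1]), (1, [0, 2]), (1, [0, 3]), (1, [1, 2]), (1, [1, 3]), (1, [2, 3]),
   (1, [0, 1, 2, 3])]

/-- The correlation of two consecutive terms. -/
def pairForm : SignPoly := [(1, [0, 1])]

/-- The difference between `k` copies of a window of step `g` and one window of step `k * g`. -/
def dilationForm (P : SignPoly) (k g s t : ℕ) : SignPoly :=
  (P.window s g).scale k ++ (P.window t (k * g)).scale (-1)

/-- The difference between the correlations at steps `k * g` and `g`. -/
def chainForm (k g s t : ℕ) : SignPoly :=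
  pairForm.window t (k * g) ++ (pairForm.window s g).scale (-1)

/-- The combination of differences between translates of one monomial and the monomial itself. -/
def translationForm (m : List ℕ × List (ℤ × ℕ)) : SignPoly :=
  (-(m.2.map Prod.fst).sum, m.1) :: m.2.map fun u => (u.1, m.1.map fun i => u.2 + 1 * i)

/-- The part of the certificate whose average over all progressions is nonnegative. -/
def slackForm : SignPoly :=
  dilationForm doublingForm 2 1 3 4 ++ dilationForm triplingForm 3 1 3 0 ++
    dilationForm redoublingForm 2 2 4 0 ++ dilationForm quintuplingForm 5 1 3 0 ++
    (chainForm 2 1 3 3).scale 28092 ++ (chainForm 3 1 3 0).scale 14404 ++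
    (chainForm 5 1 3 0).scale 256 ++ (chainForm 2 4 0 0).scale 2160 ++
    (chainForm 3 4 0 0).scale 820 ++ (chainForm 2 5 0 0).scale 159 ++
    (chainForm 2 8 0 0).scale 282 ++ (pairForm.window 3 1).scale 86888

/-- The certificate: a polynomial in seventeen sign variables that is nonnegative on all sign
assignments. -/
def certificate : SignPoly :=
  (monoForm.window 3 1).scale 15000 ++ [(-7290, [])] ++ slackForm.scale (-1) ++
    translationData.flatMap translationForm

lemma doublingForm_isNonneg : doublingForm.isNonneg 20 (List.range 7) = true := by decide +kernel

lemma triplingForm_isNonneg : triplingForm.isNonneg 20 (List.range 6) = true := by decide +kernel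

lemma redoublingForm_isNonneg : redoublingForm.isNonneg 20 (List.range 6) = true := by
  decide +kernel

lemma quintuplingForm_isNonneg : quintuplingForm.isNonneg 20 (List.range 5) = true := by
  decide +kernel

lemma certificate_isNonneg : certificate.isNonneg 19
    [0, 3, 4, 5, 6, 7, 8, 9, 10, 11, 12, 13, 14, 15, 16, 17, 20] = true := by
  decide +kernel

section Averages

variable {n : ℕ} [NeZero n]

/-- The sum of a polynomial over all arithmetic progressions in `ZMod n`. -/
def progressionSum (f : ZMod n → ℤˣ) (P : SignPoly) : ℤ :=
  ∑ a : ZMod n, ∑ d : ZMod n, P.eval fun i => f (a + i • d)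

variable (f : ZMod n → ℤˣ)

lemma progressionSum_append (P Q : SignPoly) :
    progressionSum f (P ++ Q) = progressionSum f P + progressionSum f Q := by
  simp only [progressionSum, eval_append, Finset.sum_add_distrib]

lemma progressionSum_cons (t : ℤ × List ℕ) (P : SignPoly) :
    progressionSum f (t :: P) = progressionSum f [t] + progressionSum f P :=
  progressionSum_append f [t] P

lemma progressionSum_nil : progressionSum f [] = 0 := by
  simp [progressionSum, eval_nil]

lemma progressionSum_scale (k : ℤ) (P : SignPoly) :
    progressionSum f (P.scale k) = k * progressionSum f P := by
  simp only [progressionSum, eval_scale, Finset.mul_sum]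

lemma progressionSum_nonneg {P : SignPoly} (hP : ∀ x, 0 ≤ P.eval x) : 0 ≤ progressionSum f P :=
  Finset.sum_nonneg fun _ _ => Finset.sum_nonneg fun _ _ => hP _

lemma progressionSum_window (s g : ℕ) (P : SignPoly) :
    progressionSum f (P.window s g) =
      ∑ a : ZMod n, ∑ d : ZMod n, P.eval fun i => f (a + i • g • d) := by
  simp only [progressionSum, eval_window]
  rw [Finset.sum_comm]
  conv_rhs => rw [Finset.sum_comm]
  refine Finset.sum_congr rfl fun d _ => ?_
  refine Fintype.sum_equiv (Equiv.addRight (s • d)) _ _ fun a => ?_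
  simp only [Equiv.coe_addRight, add_smul, mul_comm g, mul_smul, add_assoc]

lemma progressionSum_window_one (s : ℕ) (P : SignPoly) :
    progressionSum f (P.window s 1) = progressionSum f P := by
  rw [progressionSum_window]
  simp only [one_smul, progressionSum]

lemma card_filter_nsmul_eq_le (k : ℕ) (hk : 0 < k) (e : ZMod n) :
    (Finset.univ.filter fun d : ZMod n => k • d = e).card ≤ k := by
  rcases (Finset.univ.filter fun d : ZMod n => k • d = e).eq_empty_or_nonempty with h | ⟨d₀, h₀⟩
  · rw [h, Finset.card_empty]
    exact hk.le
  · refine le_trans (Finset.card_le_card_of_injOn (fun d => d - d₀) ?_ ?_)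
      (IsAddCyclic.card_nsmul_eq_zero_le (α := ZMod n) hk)
    · intro d hd
      simp_all [mul_sub]
    · exact fun _ _ _ _ h => sub_left_injective h

lemma sum_nsmul_le (k : ℕ) (hk : 0 < k) (φ : ZMod n → ℤ) (hφ : ∀ d, 0 ≤ φ d) :
    ∑ d, φ (k • d) ≤ k * ∑ d, φ d := by
  rw [← Finset.sum_fiberwise_of_maps_to (s := Finset.univ) (t := Finset.univ)
    (g := fun d : ZMod n => k • d) (fun _ _ => Finset.mem_univ _), Finset.mul_sum]
  refine Finset.sum_le_sum fun e _ => ?_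
  calc ∑ d ∈ Finset.univ.filter (fun d : ZMod n => k • d = e), φ (k • d)
      = ∑ d ∈ Finset.univ.filter (fun d : ZMod n => k • d = e), φ e :=
        Finset.sum_congr rfl fun d hd => by rw [(Finset.mem_filter.1 hd).2]
    _ = (Finset.univ.filter fun d : ZMod n => k • d = e).card * φ e := by simp
    _ ≤ k * φ e := by
        have := card_filter_nsmul_eq_le k hk e
        have := hφ e
        gcongr

lemma progressionSum_dilationForm_nonneg {P : SignPoly} (hP : ∀ x, 0 ≤ P.eval x) (k g s t : ℕ)
    (hk : 0 < k) : 0 ≤ progressionSum f (dilationForm P k g s t) := by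
  rw [dilationForm, progressionSum_append, progressionSum_scale, progressionSum_scale,
    progressionSum_window, progressionSum_window, Finset.mul_sum, neg_one_mul, ← sub_eq_add_neg,
    sub_nonneg]
  refine Finset.sum_le_sum fun a _ => ?_
  have := sum_nsmul_le k hk (fun d => P.eval fun i => f (a + i • g • d)) fun d => hP _
  refine le_trans (le_of_eq (Finset.sum_congr rfl fun d _ => ?_)) this
  simp only [mul_comm k g, mul_smul]

/-- The sum of `f` along the progression with difference `g • d` through `a`, over all `d`. -/
def cosetSum (g : ℕ) (a : ZMod n) : ℤ := ∑ d : ZMod n, (f (a + g • d) : ℤ)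

lemma card_mul_progressionSum_pairForm (s g : ℕ) :
    n * progressionSum f (pairForm.window s g) = ∑ a : ZMod n, cosetSum f g a ^ 2 := by
  have h : ∀ e : ZMod n, progressionSum f (pairForm.window s g) =
      ∑ a : ZMod n, (f (a + g • e) : ℤ) * cosetSum f g a := by
    intro e
    rw [progressionSum_window]
    refine (Fintype.sum_equiv (Equiv.addRight (g • e)) _ _ fun a => ?_).symm
    rw [cosetSum, Finset.mul_sum]
    refine Fintype.sum_equiv (Equiv.subRight e) _ _ fun d => ?_
    simp [pairForm, eval, termEval, mul_sub]
  calc (n : ℤ) * progressionSum f (pairForm.window s g)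
      = ∑ e : ZMod n, progressionSum f (pairForm.window s g) := by simp [ZMod.card]
    _ = ∑ e : ZMod n, ∑ a : ZMod n, (f (a + g • e) : ℤ) * cosetSum f g a :=
        Finset.sum_congr rfl fun e _ => h e
    _ = _ := by
        rw [Finset.sum_comm]
        refine Finset.sum_congr rfl fun a _ => ?_
        rw [← Finset.sum_mul, sq]
        rfl

lemma card_mul_cosetSum (k g : ℕ) (a : ZMod n) :
    n * cosetSum f g a = ∑ j : ZMod n, cosetSum f (k * g) (a + g • j) := by
  simp only [cosetSum]
  rw [Finset.sum_comm]
  have h : ∀ e : ZMod n, ∑ j : ZMod n, (f (a + g • j + (k * g) • e) : ℤ) = cosetSum f g a := by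
    intro e
    refine Fintype.sum_equiv (Equiv.addRight (k • e)) _ _ fun j => ?_
    simp only [Equiv.coe_addRight, smul_add, add_assoc, mul_comm k g, mul_smul]
  rw [Finset.sum_congr rfl fun e _ => h e, Finset.sum_const, Finset.card_univ, ZMod.card,
    nsmul_eq_mul, cosetSum]

lemma sum_cosetSum_sq_le (k g : ℕ) :
    ∑ a : ZMod n, cosetSum f g a ^ 2 ≤ ∑ a : ZMod n, cosetSum f (k * g) a ^ 2 := by
  have hn : (0 : ℤ) < n := by exact_mod_cast Nat.pos_of_neZero n
  have h : ∀ a : ZMod n, n * cosetSum f g a ^ 2 ≤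
      ∑ j : ZMod n, cosetSum f (k * g) (a + g • j) ^ 2 := by
    intro a
    have := sq_sum_le_card_mul_sum_sq (s := Finset.univ)
      (f := fun j : ZMod n => cosetSum f (k * g) (a + g • j))
    rw [← card_mul_cosetSum, Finset.card_univ, ZMod.card] at this
    refine le_of_mul_le_mul_left ?_ hn
    linarith
  have h₂ := Finset.sum_le_sum fun a (_ : a ∈ Finset.univ) => h a
  rw [← Finset.mul_sum, Finset.sum_comm] at h₂
  have h₃ : ∀ j : ZMod n, ∑ a : ZMod n, cosetSum f (k * g) (a + g • j) ^ 2 =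
      ∑ a : ZMod n, cosetSum f (k * g) a ^ 2 := fun j =>
    Fintype.sum_equiv (Equiv.addRight (g • j)) _ _ fun a => rfl
  rw [Finset.sum_congr rfl fun j _ => h₃ j, Finset.sum_const, Finset.card_univ, ZMod.card,
    nsmul_eq_mul] at h₂
  exact le_of_mul_le_mul_left h₂ hn

lemma progressionSum_pairForm_nonneg (s g : ℕ) :
    0 ≤ progressionSum f (pairForm.window s g) := by
  have hn : (0 : ℤ) < n := by exact_mod_cast Nat.pos_of_neZero n
  refine nonneg_of_mul_nonneg_right ?_ hn
  rw [card_mul_progressionSum_pairForm]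
  positivity

lemma progressionSum_chainForm_nonneg (k g s t : ℕ) :
    0 ≤ progressionSum f (chainForm k g s t) := by
  have hn : (0 : ℤ) < n := by exact_mod_cast Nat.pos_of_neZero n
  rw [chainForm, progressionSum_append, progressionSum_scale, neg_one_mul, ← sub_eq_add_neg,
    sub_nonneg]
  refine le_of_mul_le_mul_left ?_ hn
  rw [card_mul_progressionSum_pairForm, card_mul_progressionSum_pairForm]
  exact sum_cosetSum_sq_le f k g

lemma progressionSum_singleton (c : ℤ) (l : List ℕ) :
    progressionSum f [(c, l)] = c * progressionSum f [(1, l)] := by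
  rw [← progressionSum_scale]
  simp [scale]

lemma progressionSum_translationForm (m : List ℕ × List (ℤ × ℕ)) :
    progressionSum f (translationForm m) = 0 := by
  obtain ⟨l, us⟩ := m
  have h : progressionSum f (us.map fun u => (u.1, l.map fun i => u.2 + 1 * i)) =
      (us.map Prod.fst).sum * progressionSum f [(1, l)] := by
    induction us with
    | nil => simp [progressionSum_nil]
    | cons u us ih =>
      have h₁ : [(u.1, l.map fun i => u.2 + 1 * i)] = window u.2 1 [(u.1, l)] := rfl
      rw [List.map_cons, progressionSum_cons, ih, h₁, progressionSum_window_one,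
        progressionSum_singleton, List.map_cons, List.sum_cons, add_mul]
  rw [translationForm, progressionSum_cons, progressionSum_singleton, h]
  ring

lemma progressionSum_flatMap_translationForm (L : List (List ℕ × List (ℤ × ℕ))) :
    progressionSum f (L.flatMap translationForm) = 0 := by
  induction L with
  | nil => exact progressionSum_nil f
  | cons m L ih =>
    rw [List.flatMap_cons, progressionSum_append, ih, progressionSum_translationForm, add_zero]

lemma progressionSum_slackForm_nonneg : 0 ≤ progressionSum f slackForm := by
  have h₁ := progressionSum_dilationForm_nonneg f
    (eval_nonneg_of_isNonneg doublingForm_isNonneg) 2 1 3 4 (by norm_num)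
  have h₂ := progressionSum_dilationForm_nonneg f
    (eval_nonneg_of_isNonneg triplingForm_isNonneg) 3 1 3 0 (by norm_num)
  have h₃ := progressionSum_dilationForm_nonneg f
    (eval_nonneg_of_isNonneg redoublingForm_isNonneg) 2 2 4 0 (by norm_num)
  have h₄ := progressionSum_dilationForm_nonneg f
    (eval_nonneg_of_isNonneg quintuplingForm_isNonneg) 5 1 3 0 (by norm_num)
  have h₅ := progressionSum_chainForm_nonneg f
  have h₆ := progressionSum_pairForm_nonneg f 3 1
  simp only [slackForm, progressionSum_append, progressionSum_scale]
  linarith [h₅ 2 1 3 3, h₅ 3 1 3 0, h₅ 5 1 3 0, h₅ 2 4 0 0, h₅ 3 4 0 0, h₅ 2 5 0 0, h₅ 2 8 0 0]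

lemma progressionSum_monoForm_ge : 7290 * (n : ℤ) ^ 2 ≤ 15000 * progressionSum f monoForm := by
  have h := progressionSum_nonneg f (eval_nonneg_of_isNonneg certificate_isNonneg)
  simp only [certificate, progressionSum_append, progressionSum_scale, progressionSum_window_one,
    progressionSum_flatMap_translationForm] at h
  have h₁ := progressionSum_slackForm_nonneg f
  have h₂ : progressionSum f [(-7290, [])] = -7290 * (n : ℤ) ^ 2 := by
    simp [progressionSum, eval, termEval, ZMod.card]
    ring
  linarith

open Classical in
lemma eval_monoForm (x : ℕ → ℤˣ) :
    monoForm.eval x = if ∀ i < 4, x i = x 0 then 8 else 0 := by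
  have h : (∀ i < 4, x i = x 0) ↔ x 1 = x 0 ∧ x 2 = x 0 ∧ x 3 = x 0 :=
    ⟨fun h => ⟨h 1 (by norm_num), h 2 (by norm_num), h 3 (by norm_num)⟩, fun h i hi => by
      interval_cases i <;> simp [h]⟩
  simp only [h]
  rcases Int.units_eq_one_or (x 0) with h₀ | h₀ <;>
    rcases Int.units_eq_one_or (x 1) with h₁ | h₁ <;>
    rcases Int.units_eq_one_or (x 2) with h₂ | h₂ <;>
    rcases Int.units_eq_one_or (x 3) with h₃ | h₃ <;>
    simp [monoForm, eval, termEval, h₀, h₁, h₂, h₃]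

end Averages

/-- The two colors as signs. -/
def colorSign (b : Fin 2) : ℤˣ := if b = 0 then 1 else -1

lemma colorSign_injective : Function.Injective colorSign := by decide

lemma progressionSum_monoForm_eq {n : ℕ} [NeZero n] (c : ZMod n → Fin 2) :
    progressionSum (fun a => colorSign (c a)) monoForm = 8 * monoAPCount n 4 c := by
  classical
  have h : {p : ZMod n × ZMod n | ∀ i < 4, c (p.1 + i • p.2) = c p.1} =
      ↑(Finset.univ.filter fun p : ZMod n × ZMod n => ∀ i < 4, c (p.1 + i • p.2) = c p.1) := by
    simp
  rw [monoAPCount, h, Set.ncard_coe_finset, Finset.card_filter, progressionSum,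
    ← Fintype.sum_prod_type']
  push_cast
  rw [Finset.mul_sum]
  refine Finset.sum_congr rfl fun p _ => ?_
  rw [eval_monoForm]
  simp only [zero_smul, add_zero, colorSign_injective.eq_iff]
  split_ifs <;> simp

theorem m4_lower_bound_div_four :
    ∃ N : ℕ, ∀ n : ℕ, N ≤ n → 4 ∣ n →
      ∀ c : ZMod n → Fin 2, (2 / 33 : ℝ) * (n : ℝ) ^ 2 ≤ (monoAPCount n 4 c : ℝ) := by
  refine ⟨1, fun n hn _ c => ?_⟩
  have : NeZero n := ⟨by omega⟩
  have h := progressionSum_monoForm_ge fun a => colorSign (c a)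
  rw [progressionSum_monoForm_eq] at h
  have h' : 7290 * (n : ℝ) ^ 2 ≤ 15000 * (8 * (monoAPCount n 4 c : ℝ)) := by exact_mod_cast h
  nlinarith [sq_nonneg (n : ℝ)]
end

section
/- For every ε > 0 there exists N such that for every odd integer n ≥ N there exists a 2-coloring c of Z_n with M_5(n,c) ≤ (3629/65712 + ε)·n². -/
/-! We color `ZMod n` by cutting it into `44` blocks of almost equal length, each of one color.
Up to `O(n)` errors, the monochromatic `5`-APs are counted by a finite sum over the block
positions `i, j` of the first term and the difference, the carries `m` of the other terms and
a subdivision of the difference block into `144` cells. -/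

namespace BlockColoring

open Finset

/-- The color of the block with index `x < 44`, read off the binary digits of a number. -/
def blockColor (x : ℕ) : Bool := Nat.testBit 4560482429112 x

/-- The possible carries `⌊s + k * t⌋`, `k = 1, 2, 3, 4`, for `s, t ∈ [0, 1)`. -/
def carries : Finset (ℕ × ℕ × ℕ × ℕ) :=
  (range 2 ×ˢ range 3 ×ˢ range 4 ×ˢ range 5).filter fun m =>
    (m.1 ≤ m.2.1 ∧ m.2.1 ≤ m.1 + 1) ∧ (m.2.1 ≤ m.2.2.1 ∧ m.2.2.1 ≤ m.2.1 + 1) ∧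
      (m.2.2.1 ≤ m.2.2.2 ∧ m.2.2.2 ≤ m.2.2.1 + 1)

/-- A lower bound for `144 * s` when `144 * t ∈ [u, u + 1)` and the carries of `(s, t)` are `m`. -/
def lower (m : ℕ × ℕ × ℕ × ℕ) (u : ℕ) : ℕ :=
  max (144 * m.1 - (u + 1)) (max (144 * m.2.1 - 2 * (u + 1))
    (max (144 * m.2.2.1 - 3 * (u + 1)) (144 * m.2.2.2 - 4 * (u + 1))))

/-- An upper bound for `144 * s` when `144 * t ∈ [u, u + 1)` and the carries of `(s, t)` are
`m`. -/
def upper (m : ℕ × ℕ × ℕ × ℕ) (u : ℕ) : ℕ :=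
  min 144 (min (144 * (m.1 + 1) - u) (min (144 * (m.2.1 + 1) - 2 * u)
    (min (144 * (m.2.2.1 + 1) - 3 * u) (144 * (m.2.2.2 + 1) - 4 * u))))

/-- Pairs of blocks for which the `5`-AP of blocks with carries `m` is monochromatic. -/
def monoBlocks (m : ℕ × ℕ × ℕ × ℕ) : Finset (ℕ × ℕ) :=
  (range 44 ×ˢ range 44).filter fun b =>
    blockColor ((b.1 + b.2 + m.1) % 44) = blockColor b.1 ∧
    blockColor ((b.1 + 2 * b.2 + m.2.1) % 44) = blockColor b.1 ∧
    blockColor ((b.1 + 3 * b.2 + m.2.2.1) % 44) = blockColor b.1 ∧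
    blockColor ((b.1 + 4 * b.2 + m.2.2.2) % 44) = blockColor b.1

theorem sum_carries_le :
    65712 * ∑ m ∈ carries, #(monoBlocks m) * ∑ u ∈ range 144, (upper m u - lower m u) ≤
      3629 * 6336 ^ 2 := by
  decide +kernel

/-- The integers `x < n` with `x / n ∈ [p / 6336, q / 6336)`. -/
def cell (n p q : ℕ) : Finset ℕ := (range n).filter fun x => n * p ≤ 6336 * x ∧ 6336 * x < n * q

theorem card_cell_le (n p q : ℕ) :
    (#(cell n p q) : ℝ) ≤ n * ((q - p : ℕ) : ℝ) / 6336 + 1 := by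
  rcases le_total q p with h | h
  · have : cell n p q = ∅ := by
      refine filter_eq_empty_iff.2 fun x _ hx => ?_
      have := Nat.mul_le_mul_left n h
      omega
    simp [this, Nat.sub_eq_zero_of_le h]
  · have hsub : cell n p q ⊆ Ico ⌈(n * p / 6336 : ℝ)⌉₊ ⌈(n * q / 6336 : ℝ)⌉₊ := by
      intro x hx
      obtain ⟨_, h1, h2⟩ := mem_filter.1 hx
      have h1' : (n * p : ℝ) ≤ 6336 * x := by exact_mod_cast h1
      have h2' : (6336 * x : ℝ) < n * q := by exact_mod_cast h2
      rw [mem_Ico, Nat.ceil_le, Nat.lt_ceil]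
      constructor <;> linarith
    have hle : ⌈(n * p / 6336 : ℝ)⌉₊ ≤ ⌈(n * q / 6336 : ℝ)⌉₊ := by gcongr
    have hcard : (#(cell n p q) : ℝ) ≤
        (⌈(n * q / 6336 : ℝ)⌉₊ : ℝ) - ⌈(n * p / 6336 : ℝ)⌉₊ := by
      rw [← Nat.cast_sub hle, ← Nat.card_Ico]
      exact_mod_cast card_le_card hsub
    have h1 := Nat.le_ceil (n * p / 6336 : ℝ)
    have h2 := Nat.ceil_lt_add_one (show (0 : ℝ) ≤ n * q / 6336 by positivity)
    rw [Nat.cast_sub h]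
    linarith [show (n * (q - p) / 6336 : ℝ) = n * q / 6336 - n * p / 6336 by ring]

/-- The coloring of `ZMod n` by `44` monochromatic blocks. -/
def coloring (n : ℕ) (x : ZMod n) : Fin 2 := if blockColor (44 * x.val / n) then 1 else 0

theorem coloring_eq_iff {n : ℕ} {x y : ZMod n} :
    coloring n x = coloring n y ↔ blockColor (44 * x.val / n) = blockColor (44 * y.val / n) := by
  unfold coloring
  cases blockColor (44 * x.val / n) <;> cases blockColor (44 * y.val / n) <;> simp

/-- Index set of the boxes covering the monochromatic `5`-APs. -/
def boxIndex : Finset (Σ _ : ℕ × ℕ × ℕ × ℕ, (ℕ × ℕ) × ℕ) :=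
  carries.sigma fun m => monoBlocks m ×ˢ range 144

/-- The box of pairs (first term, difference) with a given index. -/
def box (n : ℕ) (t : Σ _ : ℕ × ℕ × ℕ × ℕ, (ℕ × ℕ) × ℕ) : Finset (ℕ × ℕ) :=
  cell n (144 * t.2.1.1 + lower t.1 t.2.2) (144 * t.2.1.1 + upper t.1 t.2.2) ×ˢ
    cell n (144 * t.2.1.2 + t.2.2) (144 * t.2.1.2 + t.2.2 + 1)

theorem block_term {n : ℕ} (hn : 0 < n) (A D k : ℕ) :
    44 * ((A + k * D) % n) / n =
      (44 * A / n + k * (44 * D / n) + (44 * A % n + k * (44 * D % n)) / n) % 44 := by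
  have h1 : 44 * ((A + k * D) % n) / n = (44 * (A + k * D) / n) % 44 := by
    rw [← Nat.mul_mod_mul_left, mul_comm 44 n, Nat.mod_mul_right_div_self]
  have h2 : 44 * (A + k * D) = (44 * A % n + k * (44 * D % n)) +
      n * (44 * A / n + k * (44 * D / n)) := by
    nlinarith [Nat.mod_add_div (44 * A) n, Nat.mod_add_div (44 * D) n]
  rw [h1, h2, Nat.add_mul_div_left _ _ hn, add_comm]

theorem val_term {n : ℕ} [NeZero n] (a d : ZMod n) (k : ℕ) :
    (a + k • d).val = (a.val + k * d.val) % n := by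
  rw [← ZMod.val_natCast]
  simp

theorem carry_bounds {n s t k u : ℕ} (hn : 0 < n) (h1 : n * u ≤ 144 * t)
    (h2 : 144 * t < n * (u + 1)) :
    n * (144 * ((s + k * t) / n) - k * (u + 1)) ≤ 144 * s ∧
      144 * s < n * (144 * ((s + k * t) / n + 1) - k * u) := by
  have h3 := Nat.mod_add_div (s + k * t) n
  have h4 := Nat.mod_lt (s + k * t) hn
  set q := (s + k * t) / n
  have h0 := Nat.zero_le ((s + k * t) % n)
  have h5 : k * (n * u) ≤ k * (144 * t) := Nat.mul_le_mul_left k h1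
  have h6 : k * (144 * t) ≤ k * (n * (u + 1)) := Nat.mul_le_mul_left k h2.le
  rw [Nat.mul_sub, Nat.mul_sub, tsub_le_iff_right, lt_tsub_iff_right]
  constructor <;> nlinarith

theorem exists_box {n : ℕ} [NeZero n] {a d : ZMod n}
    (h : ∀ i < 5, coloring n (a + i • d) = coloring n a) :
    ∃ t ∈ boxIndex, (a.val, d.val) ∈ box n t := by
  have hn : 0 < n := NeZero.pos n
  have hc (k : ℕ) (hk : k < 5) := coloring_eq_iff.1 (h k hk)
  simp only [val_term, block_term hn] at hc
  have hA := ZMod.val_lt a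
  have hD := ZMod.val_lt d
  set A := a.val
  set D := d.val
  have hs := Nat.mod_lt (44 * A) hn
  have ht := Nat.mod_lt (44 * D) hn
  have hs' := Nat.mod_add_div (44 * A) n
  have ht' := Nat.mod_add_div (44 * D) n
  have hi : 44 * A / n < 44 := Nat.div_lt_of_lt_mul (by nlinarith)
  have hj : 44 * D / n < 44 := Nat.div_lt_of_lt_mul (by nlinarith)
  set i := 44 * A / n
  set j := 44 * D / n
  set s := 44 * A % n
  set t := 44 * D % n
  have hu : 144 * t / n < 144 := Nat.div_lt_of_lt_mul (by nlinarith)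
  have hu1 : n * (144 * t / n) ≤ 144 * t := Nat.mul_div_le _ _
  have hu2 : 144 * t < n * (144 * t / n + 1) := Nat.lt_mul_div_succ _ hn
  set u := 144 * t / n
  have hb (k : ℕ) := carry_bounds (s := s) (k := k) hn hu1 hu2
  have hlt (k : ℕ) : (s + k * t) / n < k + 1 := Nat.div_lt_of_lt_mul (by nlinarith)
  have hle (k : ℕ) : (s + k * t) / n ≤ (s + (k + 1) * t) / n :=
    Nat.div_le_div_right (by nlinarith)
  have hle' (k : ℕ) : (s + (k + 1) * t) / n ≤ (s + k * t) / n + 1 := by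
    rw [← Nat.add_div_right _ hn]
    exact Nat.div_le_div_right (by nlinarith)
  refine ⟨⟨((s + 1 * t) / n, (s + 2 * t) / n, (s + 3 * t) / n, (s + 4 * t) / n),
    (i, j), u⟩, ?_, ?_⟩
  · simp only [boxIndex, carries, monoBlocks, mem_sigma, mem_filter, mem_product, mem_range]
    have hc1 := hc 1 (by norm_num)
    rw [one_mul j] at hc1
    exact ⟨⟨⟨hlt 1, hlt 2, hlt 3, hlt 4⟩, ⟨hle 1, hle' 1⟩, ⟨hle 2, hle' 2⟩, hle 3, hle' 3⟩,
      ⟨⟨hi, hj⟩, hc1, hc 2 (by norm_num), hc 3 (by norm_num), hc 4 (by norm_num)⟩, hu⟩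
  · have hlow : n * lower ((s + 1 * t) / n, (s + 2 * t) / n, (s + 3 * t) / n, (s + 4 * t) / n) u ≤
        144 * s := by
      simp only [lower, mul_max_of_nonneg _ _ (Nat.zero_le n), max_le_iff]
      exact ⟨by simpa using (hb 1).1, (hb 2).1, (hb 3).1, (hb 4).1⟩
    have hupp : 144 * s <
        n * upper ((s + 1 * t) / n, (s + 2 * t) / n, (s + 3 * t) / n, (s + 4 * t) / n) u := by
      simp only [upper, mul_min_of_nonneg _ _ (Nat.zero_le n), lt_min_iff]
      exact ⟨by omega, by simpa using (hb 1).2, (hb 2).2, (hb 3).2, (hb 4).2⟩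
    simp only [box, cell, mem_product, mem_filter, mem_range]
    refine ⟨⟨hA, ?_, ?_⟩, hD, ?_, ?_⟩ <;> nlinarith

theorem monoAPCount_le_sum (n : ℕ) [NeZero n] :
    monoAPCount n 5 (coloring n) ≤ ∑ t ∈ boxIndex, #(box n t) := by
  classical
  refine le_trans ?_ card_biUnion_le
  rw [monoAPCount, ← Set.ncard_coe_finset]
  refine Set.ncard_le_ncard_of_injOn (fun p => (p.1.val, p.2.val)) ?_ ?_ (finite_toSet _)
  · rintro ⟨a, d⟩ h
    simpa using exists_box h
  · rintro ⟨a, d⟩ _ ⟨a', d'⟩ _ h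
    obtain ⟨h1, h2⟩ := Prod.mk.inj h
    exact Prod.ext (ZMod.val_injective n h1) (ZMod.val_injective n h2)

theorem card_box_le {n : ℕ} (hn : 1 ≤ n) (t : Σ _ : ℕ × ℕ × ℕ × ℕ, (ℕ × ℕ) × ℕ) :
    (#(box n t) : ℝ) ≤
      (n : ℝ) ^ 2 / 6336 ^ 2 * ((upper t.1 t.2.2 - lower t.1 t.2.2 : ℕ) : ℝ) + 3 * n := by
  have h1 := card_cell_le n (144 * t.2.1.1 + lower t.1 t.2.2) (144 * t.2.1.1 + upper t.1 t.2.2)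
  have h2 := card_cell_le n (144 * t.2.1.2 + t.2.2) (144 * t.2.1.2 + t.2.2 + 1)
  rw [Nat.add_sub_add_left] at h1
  rw [Nat.add_sub_cancel_left, Nat.cast_one, mul_one] at h2
  have h3 : ((upper t.1 t.2.2 - lower t.1 t.2.2 : ℕ) : ℝ) ≤ 144 := by
    exact_mod_cast (Nat.sub_le _ _).trans (min_le_left _ _)
  set l : ℝ := ((upper t.1 t.2.2 - lower t.1 t.2.2 : ℕ) : ℝ)
  have hn' : (1 : ℝ) ≤ n := by exact_mod_cast hn
  rw [box, card_product, Nat.cast_mul]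
  refine (mul_le_mul h1 h2 (by positivity) (by positivity)).trans ?_
  nlinarith [mul_le_mul_of_nonneg_left h3 (by positivity : (0 : ℝ) ≤ n)]

theorem sum_boxIndex_le :
    (∑ t ∈ boxIndex, ((upper t.1 t.2.2 - lower t.1 t.2.2 : ℕ) : ℝ)) ≤
      3629 / 65712 * 6336 ^ 2 := by
  have h : ∑ t ∈ boxIndex, (upper t.1 t.2.2 - lower t.1 t.2.2) =
      ∑ m ∈ carries, #(monoBlocks m) * ∑ u ∈ range 144, (upper m u - lower m u) := by
    simp [boxIndex, sum_sigma, sum_product]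
  have h2 := sum_carries_le
  rw [← h] at h2
  have h3 : (65712 * ∑ t ∈ boxIndex, ((upper t.1 t.2.2 - lower t.1 t.2.2 : ℕ) : ℝ)) ≤
      3629 * 6336 ^ 2 := by exact_mod_cast h2
  linarith

theorem monoAPCount_coloring_le {n : ℕ} (hn : 1 ≤ n) :
    (monoAPCount n 5 (coloring n) : ℝ) ≤ 3629 / 65712 * (n : ℝ) ^ 2 + 3 * #boxIndex * n := by
  have : NeZero n := ⟨by omega⟩
  calc (monoAPCount n 5 (coloring n) : ℝ)
      ≤ ∑ t ∈ boxIndex, (#(box n t) : ℝ) := by exact_mod_cast monoAPCount_le_sum n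
    _ ≤ ∑ t ∈ boxIndex, ((n : ℝ) ^ 2 / 6336 ^ 2 *
          ((upper t.1 t.2.2 - lower t.1 t.2.2 : ℕ) : ℝ) + 3 * n) :=
        sum_le_sum fun t _ => card_box_le hn t
    _ = (n : ℝ) ^ 2 / 6336 ^ 2 *
          (∑ t ∈ boxIndex, ((upper t.1 t.2.2 - lower t.1 t.2.2 : ℕ) : ℝ)) +
          3 * #boxIndex * n := by
        rw [sum_add_distrib, ← mul_sum, sum_const, nsmul_eq_mul]
        ring
    _ ≤ (n : ℝ) ^ 2 / 6336 ^ 2 * (3629 / 65712 * 6336 ^ 2) + 3 * #boxIndex * n := by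
        gcongr
        exact sum_boxIndex_le
    _ = 3629 / 65712 * (n : ℝ) ^ 2 + 3 * #boxIndex * n := by ring

end BlockColoring

theorem m5_upper_bound_odd :
    ∀ ε : ℝ, 0 < ε → ∃ N : ℕ, ∀ n : ℕ, N ≤ n → Odd n →
      ∃ c : ZMod n → Fin 2, (monoAPCount n 5 c : ℝ) ≤ (3629 / 65712 + ε) * (n : ℝ) ^ 2 := by
  intro ε hε
  obtain ⟨N, hN⟩ := exists_nat_ge (3 * (BlockColoring.boxIndex.card : ℝ) / ε)
  refine ⟨N, fun n hn hodd => ⟨BlockColoring.coloring n,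
    (BlockColoring.monoAPCount_coloring_le hodd.pos).trans ?_⟩⟩
  have h : 3 * (BlockColoring.boxIndex.card : ℝ) ≤ n * ε :=
    (div_le_iff₀ hε).1 (hN.trans (by exact_mod_cast hn))
  nlinarith [mul_le_mul_of_nonneg_right h (Nat.cast_nonneg (α := ℝ) n)]
end
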